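/- arXiv:1711.03707 — 10 statements merged into one kernel-verified Lean document; each statement's English description precedes it below -/
import Mathlib

section
/- Let S be a PMF on a countable set Ω, let p ∈ (0,1), let f : Ω → [0,1], and set μ = E_{z←S}[f(z)] and ν = Var_{z←S}[f(z)]. Then the function Ŝ(z) = ((1 − p + p·f(z))/(1 − p + p·μ))·S(z) is itself a PMF on Ω, and E_{z←Ŝ}[f(z)] = μ + p·ν/(1 − p + p·μ). In particular, the tilted distribution Ŝ biases the expected value of f upward by exactly p·ν/(1 − p + p·μ) ≥ p·ν. -/
/-!
Since `f` is bounded, the moments `∑ S f = μ` and `∑ S f² = ν + μ²` converge absolutely, and both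
claims about the tilted weights follow from linearity of the sum. With `c = 1 - p + p μ` the total
mass is `((1 - p) + p μ) / c = 1` and the mean of `f` is `((1 - p) μ + p (ν + μ²)) / c = μ + p ν / c`.
The final inequality holds because `0 < c ≤ 1` and `ν = ∑ S (f - μ)² ≥ 0`.
-/


/-- Tilting a PMF `S` on a countable set by the density
`(1 − p + p·f(z))/(1 − p + p·μ)`, where `f : Ω → [0,1]`, `μ = E_S[f]` and
`ν = Var_S[f]`, gives a PMF whose expectation of `f` is exactly
`μ + p·ν/(1 − p + p·μ)`, a bias of at least `p·ν`. -/
theorem tilted_pmf_bias_tam_unit {Ω : Type*} [Countable Ω]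
    (S : Ω → ℝ) (hS0 : ∀ z, 0 ≤ S z) (hS1 : HasSum S 1)
    (p : ℝ) (hp : p ∈ Set.Ioo (0 : ℝ) 1)
    (f : Ω → ℝ) (hf : ∀ z, f z ∈ Set.Icc (0 : ℝ) 1)
    (μ ν : ℝ) (hμ : μ = ∑' z, S z * f z)
    (hν : ν = (∑' z, S z * (f z) ^ 2) - μ ^ 2) :
    (∀ z, 0 ≤ (1 - p + p * f z) / (1 - p + p * μ) * S z) ∧
    HasSum (fun z => (1 - p + p * f z) / (1 - p + p * μ) * S z) 1 ∧
    (∑' z, ((1 - p + p * f z) / (1 - p + p * μ) * S z) * f z)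
      = μ + p * ν / (1 - p + p * μ) ∧
    p * ν ≤ p * ν / (1 - p + p * μ) := by
  obtain ⟨hp0, hp1⟩ := hp
  have hsum1 : Summable fun z => S z * f z :=
    Summable.of_nonneg_of_le (fun z => mul_nonneg (hS0 z) (hf z).1)
      (fun z => mul_le_of_le_one_right (hS0 z) (hf z).2) hS1.summable
  have hsum2 : Summable fun z => S z * (f z) ^ 2 :=
    Summable.of_nonneg_of_le (fun z => mul_nonneg (hS0 z) (sq_nonneg _))
      (fun z => mul_le_of_le_one_right (hS0 z) (pow_le_one₀ (hf z).1 (hf z).2)) hS1.summable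
  have h1 : HasSum (fun z => S z * f z) μ := hμ ▸ hsum1.hasSum
  have h2 : HasSum (fun z => S z * (f z) ^ 2) (ν + μ ^ 2) := by
    have h := hsum2.hasSum
    rwa [show (∑' z, S z * (f z) ^ 2) = ν + μ ^ 2 by linarith] at h
  have hμ0 : 0 ≤ μ := h1.nonneg fun z => mul_nonneg (hS0 z) (hf z).1
  have hμ1 : μ ≤ 1 := hasSum_le (fun z => mul_le_of_le_one_right (hS0 z) (hf z).2) h1 hS1
  have hν0 : 0 ≤ ν := by
    have h : HasSum (fun z => S z * (f z - μ) ^ 2) ν := by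
      convert (h2.sub (h1.mul_left (2 * μ))).add (hS1.mul_left (μ ^ 2)) using 1
      · rfl
      · funext z; ring
      · ring
    exact h.nonneg fun z => mul_nonneg (hS0 z) (sq_nonneg _)
  have hc : 0 < 1 - p + p * μ := by nlinarith
  have hc1 : 1 - p + p * μ ≤ 1 := by nlinarith
  refine ⟨fun z => ?_, ?_, ?_, ?_⟩
  · have hn : 0 ≤ 1 - p + p * f z := by nlinarith [(hf z).1]
    exact mul_nonneg (div_nonneg hn hc.le) (hS0 z)
  · convert ((hS1.mul_left (1 - p)).add (h1.mul_left p)).div_const (1 - p + p * μ) using 1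
    · rfl
    · funext z; ring
    · field_simp
  · refine HasSum.tsum_eq ?_
    convert ((h1.mul_left (1 - p)).add (h2.mul_left p)).div_const (1 - p + p * μ) using 1
    · rfl
    · funext z; ring
    · field_simp; ring
  · exact le_div_self (mul_nonneg hp0.le hν0) hc hc1
end

section
/- Let S be a PMF on a countable set Ω, let p ∈ (0,1), let f : Ω → [−1,1], and set μ = E_{z←S}[f(z)] and ν = Var_{z←S}[f(z)]. Then the function Ŝ(z) = ((2 + p + p·f(z))/(2 + p + p·μ))·S(z) is itself a PMF on Ω, and E_{z←Ŝ}[f(z)] = μ + p·ν/(2 + p + p·μ). In particular, the tilted distribution Ŝ biases the expected value of f upward by exactly p·ν/(2 + p + p·μ). -/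
/-!
With `D = 2 + p + p * μ`, the total mass of the tilted weights is `((2 + p) + p * μ) / D = 1`, and
their first moment against `f` is `((2 + p) * μ + p * (ν + μ ^ 2)) / D = μ + p * ν / D`, because
`ν + μ ^ 2` is the second moment of `f`. Both moments of `f` are genuine (summable) since `f` is
bounded and `S` is summable; and `-1 ≤ μ` makes `D` positive.
-/


/-- Tilting a PMF `S` on a countable set by the density
`(2 + p + p·f(z))/(2 + p + p·μ)`, where `f : Ω → [−1,1]`, `μ = E_S[f]` and
`ν = Var_S[f]`, gives a PMF whose expectation of `f` is exactly
`μ + p·ν/(2 + p + p·μ)`. -/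
theorem tilted_pmf_bias_res {Ω : Type*} [Countable Ω]
    (S : Ω → ℝ) (hS0 : ∀ z, 0 ≤ S z) (hS1 : HasSum S 1)
    (p : ℝ) (hp : p ∈ Set.Ioo (0 : ℝ) 1)
    (f : Ω → ℝ) (hf : ∀ z, f z ∈ Set.Icc (-1 : ℝ) 1)
    (μ ν : ℝ) (hμ : μ = ∑' z, S z * f z)
    (hν : ν = (∑' z, S z * (f z) ^ 2) - μ ^ 2) :
    (∀ z, 0 ≤ (2 + p + p * f z) / (2 + p + p * μ) * S z) ∧
    HasSum (fun z => (2 + p + p * f z) / (2 + p + p * μ) * S z) 1 ∧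
    (∑' z, ((2 + p + p * f z) / (2 + p + p * μ) * S z) * f z)
      = μ + p * ν / (2 + p + p * μ) := by
  obtain ⟨hp0, -⟩ := hp
  have hs1 : Summable fun z => S z * f z := by
    refine hS1.summable.of_norm_bounded fun z => ?_
    rw [Real.norm_eq_abs, abs_mul, abs_of_nonneg (hS0 z)]
    exact mul_le_of_le_one_right (hS0 z) (abs_le.2 (hf z))
  have hs2 : Summable fun z => S z * f z ^ 2 := by
    refine hS1.summable.of_nonneg_of_le (fun z => mul_nonneg (hS0 z) (sq_nonneg _)) fun z => ?_
    exact mul_le_of_le_one_right (hS0 z) ((sq_le_one_iff_abs_le_one _).2 (abs_le.2 (hf z)))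
  have h1 : HasSum (fun z => S z * f z) μ := hμ ▸ hs1.hasSum
  have h2 : HasSum (fun z => S z * f z ^ 2) (ν + μ ^ 2) := by
    convert hs2.hasSum using 1
    linarith
  have hμ1 : -1 ≤ μ := by
    refine hasSum_le (fun z => ?_) hS1.neg h1
    nlinarith [hS0 z, (hf z).1]
  have hD : 0 < 2 + p + p * μ := by nlinarith
  refine ⟨fun z => mul_nonneg (div_nonneg ?_ hD.le) (hS0 z), ?_, HasSum.tsum_eq ?_⟩
  · nlinarith [(hf z).1]
  · have h := ((hS1.mul_left (2 + p)).add (h1.mul_left p)).mul_left (2 + p + p * μ)⁻¹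
    have hv : (2 + p + p * μ)⁻¹ * ((2 + p) * 1 + p * μ) = 1 := by field_simp
    rw [hv] at h
    refine (congrArg (HasSum · _) (funext fun z => ?_)).mp h
    ring
  · have h := ((h1.mul_left (2 + p)).add (h2.mul_left p)).mul_left (2 + p + p * μ)⁻¹
    have hv : (2 + p + p * μ)⁻¹ * ((2 + p) * μ + p * (ν + μ ^ 2))
        = μ + p * ν / (2 + p + p * μ) := by
      field_simp
      ring
    rw [hv] at h
    refine (congrArg (HasSum · _) (funext fun z => ?_)).mp h
    ring
end

section
/- Let S be a PMF on a countable set Ω, let p ∈ (0,1), let f : Ω → [0,1], and set μ = E_{z←S}[f(z)] and ν = Var_{z←S}[f(z)]. Then the function Ŝ(z) = ((1 + p·f(z))/(1 + p·μ))·S(z) is itself a PMF on Ω, and E_{z←Ŝ}[f(z)] = μ + p·ν/(1 + p·μ). In particular, the tilted distribution Ŝ biases the expected value of f upward by exactly p·ν/(1 + p·μ). -/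
/-! Write `m_k = ∑ S f ^ k`. Boundedness of `f` makes `m₁ = μ` and `m₂ = ν + μ²` honest (absolutely
convergent) sums by comparison with `∑ S = 1`. By linearity, the tilted weights sum to
`(1 + p μ) / (1 + p μ) = 1` and the tilted mean of `f` is
`(m₁ + p m₂) / (1 + p μ) = (μ + p (ν + μ²)) / (1 + p μ) = μ + p ν / (1 + p μ)`. -/

/-- Tilting a PMF `S` on a countable set by the density
`(1 + p·f(z))/(1 + p·μ)`, where `f : Ω → [0,1]`, `μ = E_S[f]` and
`ν = Var_S[f]`, gives a PMF whose expectation of `f` is exactly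
`μ + p·ν/(1 + p·μ)`. -/
theorem tilted_pmf_bias_res_unit {Ω : Type*} [Countable Ω]
    (S : Ω → ℝ) (hS0 : ∀ z, 0 ≤ S z) (hS1 : HasSum S 1)
    (p : ℝ) (hp : p ∈ Set.Ioo (0 : ℝ) 1)
    (f : Ω → ℝ) (hf : ∀ z, f z ∈ Set.Icc (0 : ℝ) 1)
    (μ ν : ℝ) (hμ : μ = ∑' z, S z * f z)
    (hν : ν = (∑' z, S z * (f z) ^ 2) - μ ^ 2) :
    (∀ z, 0 ≤ (1 + p * f z) / (1 + p * μ) * S z) ∧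
    HasSum (fun z => (1 + p * f z) / (1 + p * μ) * S z) 1 ∧
    (∑' z, ((1 + p * f z) / (1 + p * μ) * S z) * f z)
      = μ + p * ν / (1 + p * μ) := by
  have hsum1 : Summable fun z => S z * f z :=
    hS1.summable.of_nonneg_of_le (fun z => mul_nonneg (hS0 z) (hf z).1)
      fun z => mul_le_of_le_one_right (hS0 z) (hf z).2
  have hsum2 : Summable fun z => S z * f z ^ 2 :=
    hS1.summable.of_nonneg_of_le (fun z => mul_nonneg (hS0 z) (sq_nonneg _))
      fun z => mul_le_of_le_one_right (hS0 z) (pow_le_one₀ (hf z).1 (hf z).2)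
  have h1 : HasSum (fun z => S z * f z) μ := hμ ▸ hsum1.hasSum
  have h2 : HasSum (fun z => S z * f z ^ 2) (ν + μ ^ 2) := by
    have h : ν + μ ^ 2 = ∑' z, S z * f z ^ 2 := by rw [hν]; ring
    exact h ▸ hsum2.hasSum
  have hμ0 : 0 ≤ μ := h1.nonneg fun z => mul_nonneg (hS0 z) (hf z).1
  have hc : 0 < 1 + p * μ := add_pos_of_pos_of_nonneg one_pos (mul_nonneg hp.1.le hμ0)
  refine ⟨fun z => ?_, ?_, ?_⟩
  · exact mul_nonneg
      (div_nonneg (add_nonneg zero_le_one (mul_nonneg hp.1.le (hf z).1)) hc.le) (hS0 z)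
  · have h := (hS1.add (h1.mul_left p)).div_const (1 + p * μ)
    rw [div_self hc.ne'] at h
    refine (congrArg (HasSum · 1) (funext fun z => ?_)).mp h
    ring
  · have h := (h1.add (h2.mul_left p)).div_const (1 + p * μ)
    calc _ = ∑' z, (S z * f z + p * (S z * f z ^ 2)) / (1 + p * μ) :=
          tsum_congr fun z => by ring
      _ = (μ + p * (ν + μ ^ 2)) / (1 + p * μ) := h.tsum_eq
      _ = μ + p * ν / (1 + p * μ) := by
          rw [div_eq_iff hc.ne', add_mul, div_mul_cancel₀ _ hc.ne']
          ring
end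

section
/- Let D be a PMF on a countable set α, let n ∈ ℕ, p ∈ (0,1), f : α^n → [−1,1], S = D^n, and μ = E_{z←S}[f(z)]. Let Ŝ be the PMF on α^n with Ŝ(z) = ((2 − p + p·f(z))/(2 − p + p·μ))·S(z). Then for every i ∈ {1,…,n} and every prefix (d_1,…,d_i) with D(d_1)·…·D(d_i) > 0, the conditional probability of the i-th coordinate under Ŝ satisfies Pr_Ŝ[z_i = d_i | z_1 = d_1,…,z_{i−1} = d_{i−1}] = D(d_i)·(2 − p + p·f̂[d_1,…,d_i])/(2 − p + p·f̂[d_1,…,d_{i−1}]). -/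
/-! The weight that `S = D^n` puts on the event that `z` agrees with `d` on the first `i` coordinates
is again a product over the coordinates, so by the summed-out product formula `hasSum_pi_prod` it is
`P i = ∏_{j < i} D (d j)`, and `P i = D (d_i) · P (i - 1)`. The tilting density is affine in `f`,
so summing it over the event gives prefix marginal `P i · (2 - p + p · f̂[d_{≤ i}]) / Z`, with
`Z = 2 - p + p · μ > 0`. In the ratio of two consecutive prefix marginals `Z` cancels. -/

open scoped Classical

/-- `prefixProb T i d` is the probability, under the (sub)probability mass
function `T` on `α^n`, of the event that the first `i` coordinates agree with
those of `d` (the prefix marginal of `T` at the length-`i` prefix of `d`). -/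
noncomputable def prefixProb {α : Type*} {n : ℕ} (T : (Fin n → α) → ℝ)
    (i : ℕ) (d : Fin n → α) : ℝ :=
  ∑' z : Fin n → α, if ∀ j : Fin n, (j : ℕ) < i → z j = d j then T z else 0

/-- `partialAvg D S f i d` is the partial average `f̂[d_{≤i}]`: the expectation
of `f` over `z ← S = D^n` conditioned on the first `i` coordinates of `z`
agreeing with those of `d` (for the product distribution this is the average of
`f` over i.i.d. completions `d_{i+1},…,d_n ← D`). -/
noncomputable def partialAvg {α : Type*} {n : ℕ} (S : (Fin n → α) → ℝ)
    (f : (Fin n → α) → ℝ) (i : ℕ) (d : Fin n → α) : ℝ :=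
  (∑' z : Fin n → α,
      (if ∀ j : Fin n, (j : ℕ) < i → z j = d j then S z else 0) * f z) /
    prefixProb S i d

/-- The total mass of a product of nonnegative weights is the product of the total masses. -/
lemma hasSum_pi_prod {α : Type*} : ∀ (n : ℕ) (g : Fin n → α → ℝ) (a : Fin n → ℝ),
    (∀ j x, 0 ≤ g j x) → (∀ j, HasSum (g j) (a j)) →
    HasSum (fun z : Fin n → α => ∏ j, g j (z j)) (∏ j, a j) := by
  intro n
  induction n with
  | zero =>
    intro g a _ _
    simp
  | succ n ih =>
    intro g a h0 h
    have ht := ih (fun j => g j.succ) (fun j => a j.succ) (fun j => h0 _) (fun j => h _)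
    have hs : Summable fun x : α × (Fin n → α) => g 0 x.1 * ∏ j : Fin n, g j.succ (x.2 j) :=
      Summable.mul_of_nonneg (f := g 0) (g := fun z : Fin n → α => ∏ j : Fin n, g j.succ (z j))
        (h 0).summable ht.summable (fun x => h0 0 x)
        (fun z => Finset.prod_nonneg fun j _ => h0 j.succ (z j))
    have hm := (h 0).mul ht hs
    rw [← (Fin.consEquiv (fun _ : Fin (n + 1) => α)).hasSum_iff, Fin.prod_univ_succ]
    have he : (fun z : Fin (n + 1) → α => ∏ j, g j (z j)) ∘ Fin.consEquiv (fun _ => α)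
        = fun x : α × (Fin n → α) => g 0 x.1 * ∏ j, g j.succ (x.2 j) := by
      funext x
      simp [Fin.prod_univ_succ, Fin.consEquiv]
    rw [he]
    exact hm

/-- Under `D^n` a prefix has probability the product of the masses of its letters. -/
lemma hasSum_prefix_ite {α : Type*} (D : α → ℝ) (hD0 : ∀ a, 0 ≤ D a) (hD1 : HasSum D 1)
    (n i : ℕ) (d : Fin n → α) :
    HasSum (fun z : Fin n → α =>
        if ∀ j : Fin n, (j : ℕ) < i → z j = d j then ∏ j, D (z j) else 0)
      (∏ j : Fin n, if (j : ℕ) < i then D (d j) else 1) := by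
  have h := hasSum_pi_prod n (fun j x => if (j : ℕ) < i → x = d j then D x else 0)
    (fun j => if (j : ℕ) < i then D (d j) else 1)
    (fun j x => by split_ifs <;> simp [hD0])
    (fun j => by
      by_cases hj : (j : ℕ) < i
      · simp only [hj, true_imp_iff, if_true]
        convert hasSum_ite_eq (d j) (D (d j)) using 2 with x
        split_ifs with hx
        · rw [hx]
        · rfl
      · simpa [hj] using hD1)
  convert h using 2 with z
  rw [Finset.prod_ite_zero]
  simp

/-- Lengthening a prefix by one letter multiplies its probability by the mass of that letter. -/
lemma prefix_prod_step {α : Type*} (D : α → ℝ) (n i : ℕ) (d : Fin n → α) (k : Fin n)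
    (hk : (k : ℕ) + 1 = i) :
    (∏ j : Fin n, if (j : ℕ) < i then D (d j) else 1)
      = D (d k) * ∏ j : Fin n, if (j : ℕ) < i - 1 then D (d j) else 1 := by
  rw [← Finset.mul_prod_erase Finset.univ _ (Finset.mem_univ k),
    ← Finset.mul_prod_erase Finset.univ (fun j : Fin n => if (j : ℕ) < i - 1 then D (d j) else 1)
      (Finset.mem_univ k)]
  rw [if_pos (by omega), if_neg (by omega), one_mul]
  congr 1
  refine Finset.prod_congr rfl fun j hj => ?_
  have hne : (j : ℕ) ≠ k := fun h => Finset.ne_of_mem_erase hj (Fin.ext h)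
  have : (j : ℕ) < i ↔ (j : ℕ) < i - 1 := by omega
  simp only [this]

/-- For the `p`-tampering tilted distribution
`Ŝ(z) = ((2 − p + p·f(z))/(2 − p + p·μ))·D^n(z)` with `f : α^n → [−1,1]`, the
conditional probability of the `i`-th coordinate given any prefix of positive
probability is `D(d_i)·(2 − p + p·f̂[d_{≤i}])/(2 − p + p·f̂[d_{≤i−1}])`. -/
theorem pTam_tilted_conditional {α : Type*} [Countable α]
    (D : α → ℝ) (hD0 : ∀ a, 0 ≤ D a) (hD1 : HasSum D 1)
    (n : ℕ) (p : ℝ) (hp : p ∈ Set.Ioo (0 : ℝ) 1)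
    (f : (Fin n → α) → ℝ) (hf : ∀ z, f z ∈ Set.Icc (-1 : ℝ) 1)
    (S : (Fin n → α) → ℝ) (hS : S = fun z => ∏ j, D (z j))
    (μ : ℝ) (hμ : μ = ∑' z, S z * f z)
    (Shat : (Fin n → α) → ℝ)
    (hShat : Shat = fun z => (2 - p + p * f z) / (2 - p + p * μ) * S z)
    (i : ℕ) (hi1 : 1 ≤ i) (hi2 : i ≤ n) (d : Fin n → α)
    (hpos : ∀ j : Fin n, (j : ℕ) < i → 0 < D (d j)) :
    prefixProb Shat i d / prefixProb Shat (i - 1) d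
      = D (d ⟨i - 1, by omega⟩)
          * (2 - p + p * partialAvg S f i d)
          / (2 - p + p * partialAvg S f (i - 1) d) := by
  obtain ⟨hp0, hp1⟩ := hp
  have hS0 : ∀ z, 0 ≤ S z := fun z => by
    rw [hS]; exact Finset.prod_nonneg fun j _ => hD0 _
  have hSs : HasSum S 1 := by
    rw [hS]; simpa using hasSum_pi_prod n (fun _ => D) (fun _ => 1) (fun _ => hD0) (fun _ => hD1)
  -- Multiplying a summable nonnegative weight by the bounded function `f` keeps it summable.
  have hmul : ∀ T : (Fin n → α) → ℝ, (∀ z, 0 ≤ T z) → Summable T →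
      Summable fun z => T z * f z := fun T hT0 hT =>
    Summable.of_norm_bounded hT fun z => by
      rw [norm_mul, Real.norm_of_nonneg (hT0 z), Real.norm_eq_abs]
      exact mul_le_of_le_one_right (hT0 z) (abs_le.2 (hf z))
  have hμ1 : -1 ≤ μ := by
    rw [hμ]
    refine hasSum_le (fun z => ?_) hSs.neg (hmul S hS0 hSs.summable).hasSum
    nlinarith [hS0 z, (hf z).1]
  have hZ : 0 < 2 - p + p * μ := by nlinarith
  have hP : ∀ k, HasSum (fun z => if ∀ j : Fin n, (j : ℕ) < k → z j = d j then S z else 0)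
      (∏ j : Fin n, if (j : ℕ) < k then D (d j) else 1) := fun k => by
    rw [hS]; exact hasSum_prefix_ite D hD0 hD1 n k d
  have hPS : ∀ k, prefixProb S k d = ∏ j : Fin n, if (j : ℕ) < k then D (d j) else 1 :=
    fun k => (hP k).tsum_eq
  have hPpos : ∀ k ≤ i, 0 < prefixProb S k d := fun k hk => by
    rw [hPS]
    refine Finset.prod_pos fun j _ => ?_
    split_ifs with h
    · exact hpos j (by omega)
    · exact one_pos
  -- The prefix marginals of the tilted distribution.
  have key : ∀ k ≤ i, prefixProb Shat k d
      = prefixProb S k d * (2 - p + p * partialAvg S f k d) / (2 - p + p * μ) := by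
    intro k hk
    have hne := (hPpos k hk).ne'
    have hN := (hmul _ (fun z => by split_ifs <;> simp [hS0]) (hP k).summable).hasSum
    have hsum := (((hP k).mul_left (2 - p)).add (hN.mul_left p)).div_const (2 - p + p * μ)
    rw [← hPS] at hsum
    have h1 : prefixProb S k d * (2 - p + p * partialAvg S f k d)
        = (2 - p) * prefixProb S k d + p * ∑' z : Fin n → α,
          (if ∀ j : Fin n, (j : ℕ) < k → z j = d j then S z else 0) * f z := by
      unfold partialAvg
      field_simp
    rw [h1, ← hsum.tsum_eq, prefixProb, hShat]
    refine tsum_congr fun z => ?_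
    split_ifs
    · ring
    · simp
  have hstep : prefixProb S i d = D (d ⟨i - 1, by omega⟩) * prefixProb S (i - 1) d := by
    rw [hPS, hPS]; exact prefix_prod_step D n i d _ (Nat.sub_add_cancel hi1)
  have hne := (hPpos (i - 1) (Nat.sub_le _ _)).ne'
  rw [key i le_rfl, key (i - 1) (Nat.sub_le _ _), div_div_div_cancel_right₀ hZ.ne', hstep,
    mul_right_comm, mul_comm (prefixProb S (i - 1) d), mul_div_mul_right _ _ hne]
end

section
/- (Information-theoretic version of the main p-tampering biasing theorem.) Let D be a PMF on a countable set α, n ∈ ℕ, p ∈ (0,1), f : α^n → [0,1], μ = E_{z←D^n}[f(z)] and ν = Var_{z←D^n}[f(z)]. Then there exists a PMF Ŝ on α^n such that: (i) the support of Ŝ is contained in the support of D^n; (ii) for every i ∈ {1,…,n}, every prefix (d_1,…,d_{i−1}) with positive Ŝ-prefix-marginal probability, and every d ∈ α, Pr_Ŝ[z_i = d | z_1 = d_1,…,z_{i−1} = d_{i−1}] ≥ (1 − p)·D(d); and (iii) E_{z←Ŝ}[f(z)] ≥ μ + p·ν/(1 + p·μ − p). (Condition (ii) together with (i) expresses that Ŝ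 is achievable by a p-tampering attack: each coordinate conditionally contains a (1−p)·D component, with the remaining p-fraction supported inside the support of D.) -/
/-!
Tilt the product distribution towards large values of `f`: take
`Ŝ(z) = S(z) · (1 - p + p f(z)) / (1 - p + p μ)`. Its total mass is `1`, and its mean of `f` is
`((1 - p) μ + p (μ² + ν)) / (1 - p + p μ)`, which equals `μ + p ν / (1 + p μ - p)`.

Since `1 - p ≤ 1 - p + p f ≤ 1`, every prefix marginal of `Ŝ` lies between `(1 - p)/c` and `1/c`
times the same marginal of `S`, where `c = 1 - p + p μ`. The marginals of `S` are products
(`prefixProb_prod`), so extending a prefix by `a` multiplies them by exactly `D a`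
(`prefixProb_prod_update`); hence the conditional probability of `a` under `Ŝ` is at least
`(1 - p) D(a)`.
-/

open scoped Classical

/-- Sums over a finite product distribute over products of nonnegative functions. -/
theorem hasSum_prod_fin {α : Type*} : ∀ {n : ℕ} (g : Fin n → α → ℝ) (s : Fin n → ℝ)
    (_ : ∀ j a, 0 ≤ g j a) (_ : ∀ j, HasSum (g j) (s j)),
    HasSum (fun z : Fin n → α => ∏ j, g j (z j)) (∏ j, s j)
  | 0, g, s, _, _ => by simp
  | n + 1, g, s, h0, hs => by
    have ih := hasSum_prod_fin (fun j => g j.succ) (fun j => s j.succ)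
      (fun j => h0 j.succ) (fun j => hs j.succ)
    have hsum := (hs 0).summable.mul_of_nonneg ih.summable (h0 0)
      (fun z => Finset.prod_nonneg fun j _ => h0 j.succ (z j))
    have hm := (hs 0).mul ih hsum
    rw [← (Fin.consEquiv (fun _ : Fin (n + 1) => α)).hasSum_iff]
    simpa [Function.comp_def, Fin.prod_univ_succ, Fin.consEquiv] using hm

/-- The summand defining a prefix marginal of a product distribution is itself a product: each
pinned coordinate contributes a point mass. -/
theorem prefix_term_eq {α : Type*} {n : ℕ} (D : α → ℝ) (i : ℕ) (d z : Fin n → α) :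
    (if ∀ j : Fin n, (j : ℕ) < i → z j = d j then ∏ j, D (z j) else 0) =
      ∏ j : Fin n, (if (j : ℕ) < i → z j = d j then D (z j) else 0) := by
  split_ifs with h
  · exact Finset.prod_congr rfl fun j _ => (if_pos (h j)).symm
  · push Not at h
    obtain ⟨j, hj, hne⟩ := h
    exact (Finset.prod_eq_zero (Finset.mem_univ j) (if_neg fun h => hne (h hj))).symm

/-- The prefix marginals of a product distribution are products: a pinned coordinate contributes
its weight, a free one the total mass `1`. -/
theorem prefixProb_prod {α : Type*} {n : ℕ} (D : α → ℝ) (hD0 : ∀ a, 0 ≤ D a)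
    (hD1 : HasSum D 1) (i : ℕ) (d : Fin n → α) :
    prefixProb (fun z => ∏ j, D (z j)) i d =
      ∏ j : Fin n, if (j : ℕ) < i then D (d j) else 1 := by
  unfold prefixProb
  simp only [prefix_term_eq]
  refine (hasSum_prod_fin (fun (j : Fin n) (a : α) => if (j : ℕ) < i → a = d j then D a else 0)
    _ ?_ ?_).tsum_eq
  · intro j a
    split_ifs
    exacts [hD0 a, le_rfl]
  · intro j
    by_cases hj : (j : ℕ) < i
    · simp only [hj, forall_const, if_true]
      convert hasSum_ite_eq (d j) (D (d j)) using 2 with a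
      split_ifs with h
      · rw [h]
      · rfl
    · simpa [hj] using hD1

theorem prefixProb_prod_update {α : Type*} {n : ℕ} (D : α → ℝ) (hD0 : ∀ a, 0 ≤ D a)
    (hD1 : HasSum D 1) (i : ℕ) (hi : i < n) (d : Fin n → α) (a : α) :
    prefixProb (fun z => ∏ j, D (z j)) (i + 1) (Function.update d ⟨i, hi⟩ a) =
      D a * prefixProb (fun z => ∏ j, D (z j)) i d := by
  rw [prefixProb_prod D hD0 hD1, prefixProb_prod D hD0 hD1,
    ← Finset.mul_prod_erase _ _ (Finset.mem_univ (⟨i, hi⟩ : Fin n)),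
    ← Finset.mul_prod_erase Finset.univ (fun j : Fin n => if (j : ℕ) < i then D (d j) else 1)
      (Finset.mem_univ (⟨i, hi⟩ : Fin n))]
  simp only [lt_add_iff_pos_right, zero_lt_one, if_true, Function.update_self, lt_irrefl, if_false,
    one_mul]
  congr 1
  refine Finset.prod_congr rfl fun j hj => ?_
  have hne : j ≠ ⟨i, hi⟩ := Finset.ne_of_mem_erase hj
  have hv : (j : ℕ) ≠ i := fun h => hne (Fin.ext h)
  have hiff : (j : ℕ) < i + 1 ↔ (j : ℕ) < i := by omega
  simp only [hiff, Function.update_of_ne hne]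

theorem summable_prefix_term {α : Type*} {n : ℕ} {T : (Fin n → α) → ℝ} (hT0 : ∀ z, 0 ≤ T z)
    (hT : Summable T) (i : ℕ) (d : Fin n → α) :
    Summable fun z => if ∀ j : Fin n, (j : ℕ) < i → z j = d j then T z else 0 := by
  refine Summable.of_nonneg_of_le (fun z => ?_) (fun z => ?_) hT
  · split_ifs
    exacts [hT0 z, le_rfl]
  · split_ifs
    exacts [le_rfl, hT0 z]

theorem prefixProb_le_mul {α : Type*} {n : ℕ} {T U : (Fin n → α) → ℝ} (c : ℝ)
    (hT0 : ∀ z, 0 ≤ T z) (hU0 : ∀ z, 0 ≤ U z) (hT : Summable T) (hU : Summable U)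
    (h : ∀ z, T z ≤ c * U z) (i : ℕ) (d : Fin n → α) :
    prefixProb T i d ≤ c * prefixProb U i d := by
  unfold prefixProb
  rw [← tsum_mul_left]
  refine (summable_prefix_term hT0 hT i d).tsum_le_tsum (fun z => ?_)
    ((summable_prefix_term hU0 hU i d).mul_left c)
  split_ifs
  exacts [h z, by simp]

/-- Information-theoretic p-tampering biasing theorem:
for any PMF `D` on a countable `α`, any `p ∈ (0,1)` and any `f : α^n → [0,1]`
with mean `μ` and variance `ν` under `S = D^n`, there is a PMF `Ŝ` on `α^n`
supported inside the support of `D^n`, whose conditional distribution of each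
coordinate given any prefix of positive probability dominates `(1−p)·D`
pointwise (so `Ŝ` is achievable by a p-tampering attack), and whose expectation
of `f` is at least `μ + p·ν/(1 + p·μ − p)`. -/
theorem pTam_biasing_information_theoretic {α : Type*} [Countable α]
    (D : α → ℝ) (hD0 : ∀ a, 0 ≤ D a) (hD1 : HasSum D 1)
    (n : ℕ) (p : ℝ) (hp : p ∈ Set.Ioo (0 : ℝ) 1)
    (f : (Fin n → α) → ℝ) (hf : ∀ z, f z ∈ Set.Icc (0 : ℝ) 1)
    (S : (Fin n → α) → ℝ) (hS : S = fun z => ∏ j, D (z j))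
    (μ ν : ℝ) (hμ : μ = ∑' z, S z * f z)
    (hν : ν = (∑' z, S z * (f z) ^ 2) - μ ^ 2) :
    ∃ Shat : (Fin n → α) → ℝ,
      (∀ z, 0 ≤ Shat z) ∧ HasSum Shat 1 ∧
      (∀ z, Shat z ≠ 0 → S z ≠ 0) ∧
      (∀ i : ℕ, ∀ hi1 : 1 ≤ i, ∀ hi2 : i ≤ n, ∀ d : Fin n → α,
        0 < prefixProb Shat (i - 1) d → ∀ a : α,
          (1 - p) * D a ≤
            prefixProb Shat i (Function.update d ⟨i - 1, by omega⟩ a) /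
              prefixProb Shat (i - 1) d) ∧
      μ + p * ν / (1 + p * μ - p) ≤ ∑' z, Shat z * f z := by
  obtain ⟨hp0, hp1⟩ := hp
  have hS0 : ∀ z, 0 ≤ S z := fun z => by
    rw [hS]; exact Finset.prod_nonneg fun j _ => hD0 (z j)
  have hS1 : HasSum S 1 := by
    rw [hS]
    simpa using hasSum_prod_fin (fun (_ : Fin n) => D) (fun _ => 1) (fun _ => hD0) (fun _ => hD1)
  have hf0 : ∀ z, 0 ≤ f z := fun z => (hf z).1
  have hf1 : ∀ z, f z ≤ 1 := fun z => (hf z).2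
  have hs1 : Summable fun z => S z * f z :=
    Summable.of_nonneg_of_le (fun z => mul_nonneg (hS0 z) (hf0 z))
      (fun z => mul_le_of_le_one_right (hS0 z) (hf1 z)) hS1.summable
  have hs2 : Summable fun z => S z * f z ^ 2 :=
    Summable.of_nonneg_of_le (fun z => mul_nonneg (hS0 z) (sq_nonneg _))
      (fun z => mul_le_of_le_one_right (hS0 z) (pow_le_one₀ (hf0 z) (hf1 z))) hS1.summable
  have h1 : HasSum (fun z => S z * f z) μ := hμ ▸ hs1.hasSum
  have h2 : HasSum (fun z => S z * f z ^ 2) (ν + μ ^ 2) := by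
    rw [hν, sub_add_cancel]; exact hs2.hasSum
  have hμ0 : 0 ≤ μ := h1.nonneg fun z => mul_nonneg (hS0 z) (hf0 z)
  have hc : 0 < 1 + p * μ - p := by nlinarith [mul_nonneg hp0.le hμ0]
  set c := 1 + p * μ - p with hcdef
  set T : (Fin n → α) → ℝ := fun z => S z * (1 - p + p * f z) / c with hTdef
  have hw0 : ∀ z, 1 - p ≤ 1 - p + p * f z := fun z => by
    nlinarith [mul_nonneg hp0.le (hf0 z)]
  have hw1 : ∀ z, 1 - p + p * f z ≤ 1 := fun z => by
    nlinarith [mul_le_mul_of_nonneg_left (hf1 z) hp0.le]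
  have hT0 : ∀ z, 0 ≤ T z := fun z =>
    div_nonneg (mul_nonneg (hS0 z) (by linarith [hw0 z])) hc.le
  have hT1 : HasSum T 1 := by
    have h := ((hS1.mul_left (1 - p)).add (h1.mul_left p)).div_const c
    rw [show ((1 - p) * 1 + p * μ) / c = 1 by rw [div_eq_one_iff_eq hc.ne', hcdef]; ring] at h
    have e : T = fun z => ((1 - p) * S z + p * (S z * f z)) / c :=
      funext fun z => by simp only [hTdef]; ring
    rw [e]
    exact h
  refine ⟨T, hT0, hT1, fun z hz hSz => hz (by simp [hTdef, hSz]), ?_, ?_⟩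
  · intro i hi1 hi2 d hpos a
    obtain ⟨i, rfl⟩ : ∃ k, i = k + 1 := ⟨i - 1, by omega⟩
    simp only [Nat.add_sub_cancel] at hpos ⊢
    rw [le_div_iff₀ hpos]
    have hup : prefixProb T i d ≤ 1 / c * prefixProb S i d :=
      prefixProb_le_mul _ hT0 hS0 hT1.summable hS1.summable (fun z => by
        rw [hTdef, one_div_mul_eq_div]
        exact div_le_div_of_nonneg_right (mul_le_of_le_one_right (hS0 z) (hw1 z)) hc.le) i d
    have hlow : prefixProb S (i + 1) (Function.update d ⟨i, hi2⟩ a) ≤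
        c / (1 - p) * prefixProb T (i + 1) (Function.update d ⟨i, hi2⟩ a) :=
      prefixProb_le_mul _ hS0 hT0 hS1.summable hT1.summable (fun z => by
        have h1p : 0 < 1 - p := by linarith
        have : c / (1 - p) * T z = S z * (1 - p + p * f z) / (1 - p) := by
          simp only [hTdef]; field_simp
        rw [this, le_div_iff₀ h1p]
        exact mul_le_mul_of_nonneg_left (hw0 z) (hS0 z)) _ _
    have hext : prefixProb S (i + 1) (Function.update d ⟨i, hi2⟩ a) = D a * prefixProb S i d := by
      rw [hS]; exact prefixProb_prod_update D hD0 hD1 i hi2 d a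
    have h1p : 0 < 1 - p := by linarith
    calc (1 - p) * D a * prefixProb T i d
        ≤ (1 - p) * D a * (1 / c * prefixProb S i d) :=
          mul_le_mul_of_nonneg_left hup (mul_nonneg h1p.le (hD0 a))
      _ = (1 - p) / c * prefixProb S (i + 1) (Function.update d ⟨i, hi2⟩ a) := by
          rw [hext]; ring
      _ ≤ (1 - p) / c *
          (c / (1 - p) * prefixProb T (i + 1) (Function.update d ⟨i, hi2⟩ a)) :=
          mul_le_mul_of_nonneg_left hlow (div_pos h1p hc).le
      _ = prefixProb T (i + 1) (Function.update d ⟨i, hi2⟩ a) := by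
          field_simp
  · have h := ((h1.mul_left (1 - p)).add (h2.mul_left p)).div_const c
    have hE : HasSum (fun z => T z * f z) (((1 - p) * μ + p * (ν + μ ^ 2)) / c) := by
      have e : (fun z => T z * f z) =
          fun z => ((1 - p) * (S z * f z) + p * (S z * f z ^ 2)) / c :=
        funext fun z => by simp only [hTdef]; ring
      rw [e]
      exact h
    rw [hE.tsum_eq]
    -- The tilt attains the bound with equality.
    refine le_of_eq ?_
    rw [eq_div_iff hc.ne', add_mul, div_mul_cancel₀ _ hc.ne', hcdef]
    ring
end

section
/- Let p ∈ (0,1), k ≥ 1 a natural number, ξ ≥ 0, and let r, r', a, a' ∈ [0,1] be real numbers with |r − r'| ≤ ξ and |a − a'| ≤ ξ. Define F(r,a) = (1 − p) + p·((1 − a)^k + r·Σ_{i=0}^{k−1} (1 − a)^i). Then F(r,a) > 0, F(r',a') > 0, and |ln(F(r,a)/F(r',a'))| ≤ (p/(1 − p))·(k² + k)·ξ. (Here F(r,a)/D(d) is the density of the (p,k,ρ)-variation of a distribution D at a point d, where r = ρ(d) is the per-sample acceptance probability at d and a = E_{d'←D}[ρ(d')]; the lemma bounds the max-divergence between the (p,k,ρ)-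 and (p,k,ρ')-variations of D when ρ and ρ' are pointwise ξ-close.) -/
/-!
Write `G(r,a) = (1 - a)^k + r·Σ_{i<k} (1 - a)^i`, so that `F = (1 - p) + p·G`. Since `G ≥ 0`, both
values of `F` are at least `1 - p > 0`, and `log u ≤ u - 1` gives
`|log (F / F')| ≤ |F - F'| / (1 - p) = p / (1 - p) · |G - G'|` (`abs_log_div_le`).
As `x ↦ x^n` is `n`-Lipschitz on `[0,1]` (`abs_pow_sub_pow_le_mul`), the first term of `G` varies by
at most `kξ`, while each of the `k` summands `r·(1 - a)^i` varies by at most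
`ξ + iξ ≤ ξ + (k - 1)ξ = kξ`. Altogether `|G - G'| ≤ (k + k²)ξ` (`abs_density_sub_le`).
-/

lemma abs_pow_sub_pow_le_mul {x y : ℝ} (hx : x ∈ Set.Icc (0 : ℝ) 1)
    (hy : y ∈ Set.Icc (0 : ℝ) 1) (n : ℕ) : |x ^ n - y ^ n| ≤ n * |x - y| := by
  have h := abs_pow_sub_pow_le x y n
  have hm : max |x| |y| ^ (n - 1) ≤ 1 := by
    apply pow_le_one₀ (by positivity)
    rw [abs_of_nonneg hx.1, abs_of_nonneg hy.1]
    exact max_le hx.2 hy.2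
  calc |x ^ n - y ^ n| ≤ |x - y| * n * max |x| |y| ^ (n - 1) := h
    _ ≤ |x - y| * n * 1 := by gcongr
    _ = n * |x - y| := by ring

lemma abs_log_div_le {u v c : ℝ} (hc : 0 < c) (hu : c ≤ u) (hv : c ≤ v) :
    |Real.log (u / v)| ≤ |u - v| / c := by
  have key : ∀ {s t : ℝ}, c ≤ s → c ≤ t → Real.log (s / t) ≤ |s - t| / c := by
    intro s t hs ht
    have ht0 : 0 < t := hc.trans_le ht
    calc Real.log (s / t) ≤ s / t - 1 :=
          Real.log_le_sub_one_of_pos (div_pos (hc.trans_le hs) ht0)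
      _ = (s - t) / t := by field_simp
      _ ≤ |s - t| / t := by gcongr; exact le_abs_self _
      _ ≤ |s - t| / c := by gcongr
  refine abs_le'.2 ⟨key hu hv, ?_⟩
  rw [← Real.log_inv, inv_div, abs_sub_comm]
  exact key hv hu

lemma abs_density_sub_le {ξ r r' x y : ℝ} (k : ℕ)
    (hr' : r' ∈ Set.Icc (0 : ℝ) 1) (hx : x ∈ Set.Icc (0 : ℝ) 1) (hy : y ∈ Set.Icc (0 : ℝ) 1)
    (hrr : |r - r'| ≤ ξ) (hxy : |x - y| ≤ ξ) :
    |(x ^ k + r * ∑ i ∈ Finset.range k, x ^ i) - (y ^ k + r' * ∑ i ∈ Finset.range k, y ^ i)|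
      ≤ ((k : ℝ) ^ 2 + k) * ξ := by
  have hξ : 0 ≤ ξ := (abs_nonneg _).trans hxy
  have hpow : ∀ n : ℕ, |x ^ n - y ^ n| ≤ n * ξ := fun n =>
    (abs_pow_sub_pow_le_mul hx hy n).trans (by gcongr)
  have hterm : ∀ i ∈ Finset.range k, |r * x ^ i - r' * y ^ i| ≤ k * ξ := by
    intro i hi
    have hik : (i : ℝ) + 1 ≤ k := by exact_mod_cast Finset.mem_range.1 hi
    have h1 : |(r - r') * x ^ i| ≤ ξ := by
      rw [abs_mul, abs_of_nonneg (pow_nonneg hx.1 i)]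
      exact (mul_le_of_le_one_right (abs_nonneg _) (pow_le_one₀ hx.1 hx.2)).trans hrr
    have h2 : |r' * (x ^ i - y ^ i)| ≤ i * ξ := by
      rw [abs_mul, abs_of_nonneg hr'.1]
      exact (mul_le_of_le_one_left (abs_nonneg _) hr'.2).trans (hpow i)
    calc |r * x ^ i - r' * y ^ i| = |(r - r') * x ^ i + r' * (x ^ i - y ^ i)| := by ring_nf
      _ ≤ ξ + i * ξ := (abs_add_le _ _).trans (add_le_add h1 h2)
      _ = (i + 1) * ξ := by ring
      _ ≤ k * ξ := by gcongr
  have hsum : |∑ i ∈ Finset.range k, (r * x ^ i - r' * y ^ i)| ≤ k * (k * ξ) := by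
    refine (Finset.abs_sum_le_sum_abs _ _).trans ((Finset.sum_le_sum hterm).trans_eq ?_)
    simp
  calc |(x ^ k + r * ∑ i ∈ Finset.range k, x ^ i) - (y ^ k + r' * ∑ i ∈ Finset.range k, y ^ i)|
      = |(x ^ k - y ^ k) + ∑ i ∈ Finset.range k, (r * x ^ i - r' * y ^ i)| := by
        rw [Finset.sum_sub_distrib, ← Finset.mul_sum, ← Finset.mul_sum]
        ring_nf
    _ ≤ k * ξ + k * (k * ξ) := (abs_add_le _ _).trans (add_le_add (hpow k) hsum)
    _ = ((k : ℝ) ^ 2 + k) * ξ := by ring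

/-- with `F(r,a) = (1 − p) + p·((1 − a)^k + r·Σ_{i=0}^{k−1} (1 − a)^i)`
(the density of the `(p,k,ρ)`-variation of a distribution relative to the
original, where `r` is the per-sample acceptance probability at the point and
`a` its average), if `|r − r'| ≤ ξ` and `|a − a'| ≤ ξ` then `F(r,a), F(r',a')`
are positive and `|ln(F(r,a)/F(r',a'))| ≤ (p/(1 − p))·(k² + k)·ξ`. -/
theorem pkρ_variation_max_divergence (p ξ : ℝ) (hp : p ∈ Set.Ioo (0 : ℝ) 1)
    (k : ℕ) (hk : 1 ≤ k) (hξ : 0 ≤ ξ)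
    (r r' a a' : ℝ)
    (hr : r ∈ Set.Icc (0 : ℝ) 1) (hr' : r' ∈ Set.Icc (0 : ℝ) 1)
    (ha : a ∈ Set.Icc (0 : ℝ) 1) (ha' : a' ∈ Set.Icc (0 : ℝ) 1)
    (hrr : |r - r'| ≤ ξ) (haa : |a - a'| ≤ ξ)
    (F : ℝ → ℝ → ℝ)
    (hF : F = fun r a =>
      (1 - p) + p * ((1 - a) ^ k + r * ∑ i ∈ Finset.range k, (1 - a) ^ i)) :
    0 < F r a ∧ 0 < F r' a' ∧
      |Real.log (F r a / F r' a')| ≤ p / (1 - p) * ((k : ℝ) ^ 2 + k) * ξ := by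
  obtain ⟨hp0, hp1⟩ := hp
  have hq : 0 < 1 - p := by linarith
  have hlow : ∀ s b : ℝ, s ∈ Set.Icc (0 : ℝ) 1 → b ∈ Set.Icc (0 : ℝ) 1 → 1 - p ≤ F s b := by
    intro s b hs hb
    have hs0 : 0 ≤ s := hs.1
    have hb0 : 0 ≤ 1 - b := by linarith [hb.2]
    rw [hF]
    exact le_add_of_nonneg_right (by positivity)
  have h1 := hlow r a hr ha
  have h2 := hlow r' a' hr' ha'
  refine ⟨hq.trans_le h1, hq.trans_le h2, (abs_log_div_le hq h1 h2).trans ?_⟩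
  have hG := abs_density_sub_le (ξ := ξ) (r := r) (x := 1 - a) (y := 1 - a') k hr'
    ⟨by linarith [ha.2], by linarith [ha.1]⟩ ⟨by linarith [ha'.2], by linarith [ha'.1]⟩ hrr
    (by rwa [sub_sub_sub_cancel_left, abs_sub_comm])
  have hFG : |F r a - F r' a'| ≤ p * (((k : ℝ) ^ 2 + k) * ξ) := by
    simp only [hF]
    rw [add_sub_add_left_eq_sub, ← mul_sub, abs_mul, abs_of_pos hp0]
    gcongr
  calc |F r a - F r' a'| / (1 - p) ≤ p * (((k : ℝ) ^ 2 + k) * ξ) / (1 - p) := by gcongr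
    _ = p / (1 - p) * ((k : ℝ) ^ 2 + k) * ξ := by ring
end

section
/- Let α be a countable set, n ∈ ℕ, ξ ≥ 0, and let X and Y be PMFs on α^n with equal supports such that for every i ∈ {1,…,n} and every prefix (x_1,…,x_i) with positive X-prefix-marginal probability, |ln( Pr_X[z_i = x_i | z_1 = x_1,…,z_{i−1} = x_{i−1}] / Pr_Y[z_i = x_i | z_1 = x_1,…,z_{i−1} = x_{i−1}] )| ≤ ξ. Then for every function f : α^n → [−1,1], E_{z←X}[f(z)] ≥ E_{z←Y}[f(z)] − e^{ξ·n} + 1. Moreover, under these hypotheses, |ln(Pr[X = x]/Pr[Y = x])| ≤ n·ξ for every x in the common support. -/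
/-!
Along a point `x` of the common support all prefix marginals are positive, and the ratio `X x / Y x`
is the telescoping product of the ratios of conditional probabilities, so each of the `n` factors
costs at most `ξ` in absolute log (`abs_log_prefixProb_div_le`). Hence, with `K = e^{ξn}`, both
`X ≤ K Y` and `Y ≤ K X`, which gives `|X - Y| ≤ (K - 1) Y` pointwise. As `|f| ≤ 1`, summing
`(Y - X) f ≤ (K - 1) Y` gives `E_Y[f] - E_X[f] ≤ K - 1`.
-/

open scoped Classical

theorem prefixProb_zero {α : Type*} {n : ℕ} {T : (Fin n → α) → ℝ} (h1 : HasSum T 1)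
    (d : Fin n → α) : prefixProb T 0 d = 1 := by
  simp [prefixProb, h1.tsum_eq]

theorem prefixProb_full {α : Type*} {n : ℕ} (T : (Fin n → α) → ℝ)
    (d : Fin n → α) : prefixProb T n d = T d := by
  unfold prefixProb
  rw [tsum_eq_single d]
  · simp
  · intro z hz
    rw [if_neg]
    intro h
    exact hz (funext fun j => h j j.2)

theorem prefixProb_pos {α : Type*} {n : ℕ} {T : (Fin n → α) → ℝ} (h0 : ∀ z, 0 ≤ T z)
    (h1 : HasSum T 1) (i : ℕ) {d : Fin n → α} (hd : T d ≠ 0) : 0 < prefixProb T i d := by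
  unfold prefixProb
  have hs : Summable fun z : Fin n → α =>
      if ∀ j : Fin n, (j : ℕ) < i → z j = d j then T z else 0 := by
    refine Summable.of_nonneg_of_le (fun z => ?_) (fun z => ?_) h1.summable
    · split_ifs
      exacts [h0 z, le_rfl]
    · split_ifs
      exacts [le_rfl, h0 z]
  refine hs.tsum_pos (fun z => ?_) d ?_
  · split_ifs
    exacts [h0 z, le_rfl]
  · simpa using lt_of_le_of_ne (h0 d) hd.symm

/-- The chain rule in logarithmic form: over a prefix of length `i` at a point of the common
support, the log-ratio of the marginals is a sum of `i` conditional log-ratios. -/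
theorem abs_log_prefixProb_div_le {α : Type*} {n : ℕ} {ξ : ℝ} {X Y : (Fin n → α) → ℝ}
    (hX0 : ∀ z, 0 ≤ X z) (hX1 : HasSum X 1) (hY0 : ∀ z, 0 ≤ Y z) (hY1 : HasSum Y 1)
    {x : Fin n → α} (hx : X x ≠ 0) (hy : Y x ≠ 0)
    (hcond : ∀ i : ℕ, 1 ≤ i → i ≤ n → 0 < prefixProb X i x →
        |Real.log ((prefixProb X i x / prefixProb X (i - 1) x) /
            (prefixProb Y i x / prefixProb Y (i - 1) x))| ≤ ξ) (i : ℕ) (hi : i ≤ n) :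
    |Real.log (prefixProb X i x / prefixProb Y i x)| ≤ i * ξ := by
  induction i with
  | zero => simp [prefixProb_zero hX1, prefixProb_zero hY1]
  | succ i ih =>
    have a := prefixProb_pos hX0 hX1 i hx
    have a' := prefixProb_pos hX0 hX1 (i + 1) hx
    have b := prefixProb_pos hY0 hY1 i hy
    have b' := prefixProb_pos hY0 hY1 (i + 1) hy
    have h := hcond (i + 1) (by omega) hi a'
    have ih := ih (by omega)
    rw [Nat.add_sub_cancel] at h
    have e : prefixProb X (i + 1) x / prefixProb Y (i + 1) x =
        ((prefixProb X (i + 1) x / prefixProb X i x) /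
            (prefixProb Y (i + 1) x / prefixProb Y i x)) *
          (prefixProb X i x / prefixProb Y i x) := by
      field_simp
    rw [e, Real.log_mul (by positivity) (by positivity)]
    refine (abs_add_le _ _).trans ?_
    push_cast
    linarith

/-- Since `1 - 1/K ≤ K - 1`, the case `a ≤ b` obeys the same bound as the case `b ≤ a`. -/
theorem abs_sub_le_of_le_mul {K a b : ℝ} (hK : 1 ≤ K) (hab : a ≤ K * b) (hba : b ≤ K * a) :
    |b - a| ≤ (K - 1) * b := by
  rw [abs_le]
  constructor
  · linarith
  · rcases le_total a b with h | h
    · nlinarith [mul_le_mul_of_nonneg_left h (sub_nonneg.2 hK)]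
    · nlinarith

/-- if `X` and `Y` are PMFs on `α^n` with equal supports whose
coordinatewise conditional probabilities have log-ratio at most `ξ` in absolute
value, then for all `f : α^n → [−1,1]`,
`E_X[f] ≥ E_Y[f] − e^{ξ·n} + 1`; moreover `|ln(X(x)/Y(x))| ≤ n·ξ` on the common
support. -/
theorem close_conditionals_close_average {α : Type*} [Countable α] (n : ℕ)
    (ξ : ℝ) (hξ : 0 ≤ ξ)
    (X Y : (Fin n → α) → ℝ)
    (hX0 : ∀ z, 0 ≤ X z) (hX1 : HasSum X 1)
    (hY0 : ∀ z, 0 ≤ Y z) (hY1 : HasSum Y 1)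
    (hsupp : ∀ z, X z ≠ 0 ↔ Y z ≠ 0)
    (hcond : ∀ i : ℕ, 1 ≤ i → i ≤ n → ∀ x : Fin n → α,
      0 < prefixProb X i x →
        |Real.log ((prefixProb X i x / prefixProb X (i - 1) x) /
            (prefixProb Y i x / prefixProb Y (i - 1) x))| ≤ ξ) :
    (∀ f : (Fin n → α) → ℝ, (∀ z, f z ∈ Set.Icc (-1 : ℝ) 1) →
      (∑' z, Y z * f z) - Real.exp (ξ * n) + 1 ≤ ∑' z, X z * f z) ∧
    (∀ x : Fin n → α, X x ≠ 0 → |Real.log (X x / Y x)| ≤ n * ξ) := by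
  have hlog : ∀ x : Fin n → α, X x ≠ 0 → |Real.log (X x / Y x)| ≤ n * ξ := by
    intro x hx
    have h := abs_log_prefixProb_div_le hX0 hX1 hY0 hY1 hx ((hsupp x).1 hx)
      (fun i h1 h2 => hcond i h1 h2 x) n le_rfl
    rwa [prefixProb_full, prefixProb_full] at h
  refine ⟨fun f hf => ?_, hlog⟩
  have hK : 1 ≤ Real.exp (ξ * n) := Real.one_le_exp (by positivity)
  have hdiff : ∀ z, |Y z - X z| ≤ (Real.exp (ξ * n) - 1) * Y z := by
    intro z
    by_cases hz : X z = 0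
    · have hy : Y z = 0 := by
        by_contra h
        exact (hsupp z).2 h hz
      simp [hz, hy]
    · have hx : 0 < X z := lt_of_le_of_ne (hX0 z) (Ne.symm hz)
      have hy : 0 < Y z := lt_of_le_of_ne (hY0 z) (Ne.symm ((hsupp z).1 hz))
      have h := hlog z hz
      rw [Real.log_div hx.ne' hy.ne', abs_le, mul_comm (n : ℝ) ξ] at h
      apply abs_sub_le_of_le_mul hK
      · rw [← Real.exp_log hx, ← Real.exp_log hy, ← Real.exp_add, Real.exp_le_exp]
        linarith
      · rw [← Real.exp_log hx, ← Real.exp_log hy, ← Real.exp_add, Real.exp_le_exp]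
        linarith
  have habs : ∀ z, |f z| ≤ 1 := fun z => abs_le.2 (hf z)
  have hsum : ∀ T : (Fin n → α) → ℝ, (∀ z, 0 ≤ T z) → HasSum T 1 →
      Summable fun z => T z * f z := by
    intro T h0 h1
    refine Summable.of_norm_bounded h1.summable fun z => ?_
    rw [Real.norm_eq_abs, abs_mul, abs_of_nonneg (h0 z)]
    exact mul_le_of_le_one_right (h0 z) (habs z)
  have hXf := hsum X hX0 hX1
  have hYf := hsum Y hY0 hY1
  have key : ∑' z, (Y z * f z - X z * f z) ≤ ∑' z, (Real.exp (ξ * n) - 1) * Y z := by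
    refine (hYf.sub hXf).tsum_le_tsum (fun z => ?_) (hY1.summable.mul_left _)
    rw [← sub_mul]
    refine (le_abs_self _).trans ?_
    rw [abs_mul]
    exact (mul_le_of_le_one_right (abs_nonneg _) (habs z)).trans (hdiff z)
  rw [hYf.tsum_sub hXf, tsum_mul_left, hY1.tsum_eq] at key
  linarith
end

section
/- Let p ∈ (0,1), let k ≥ 1 be a natural number, and let r, c be real numbers with r ∈ [0,1] and 0 ≤ c ≤ 1/(2 − p). Define A = (1 − p) + p·(1 − r)/(1 − c) and B = (1 − p) + p·(c^k + (1 − r)·(1 − c^k)/(1 − c)). Then A > 0, B > 0, and |ln(A/B)| ≤ p/((1 − p)²·(2 − p)^{k−1}). (Here A/D(d) is the conditional density produced by the ideal p-tampering attack with unbounded rejection sampling, and B/D(d) is the conditional density produced by the k-cut variant that gives up after k rejections; the lemma bounds the per-coordinate max-divergence between the two attacks.) -/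
/-!
Put `q = 1 - p` and `x = (1 - r) / (1 - c)`. Then `A = q + p * x`, while in `B` the factor `x` is
replaced by the convex combination `c ^ k * 1 + (1 - c ^ k) * x`. Hence `A, B ≥ q > 0` and
`A - B = p * c ^ k * (x - 1)`. The bound on `c` gives `1 - c ≥ q / (1 + q)`, so `0 ≤ x ≤ 1 + 1 / q`
and `|x - 1| ≤ 1 / q`. Since `log` is `1 / q`-Lipschitz on `[q, ∞)`,
`|log (A / B)| ≤ p * c ^ k / q ^ 2`, and `c ^ k ≤ c ^ (k - 1) ≤ 1 / (2 - p) ^ (k - 1)`.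
-/

/-- `log` is `1 / q`-Lipschitz on `[q, ∞)`, in multiplicative form. -/
theorem abs_log_div_le_abs_sub_div {q a b : ℝ} (hq : 0 < q) (ha : q ≤ a) (hb : q ≤ b) :
    |Real.log (a / b)| ≤ |a - b| / q := by
  have key : ∀ u v : ℝ, q ≤ u → q ≤ v → Real.log (u / v) ≤ |u - v| / q := by
    intro u v hu hv
    have hv0 : 0 < v := hq.trans_le hv
    calc Real.log (u / v) ≤ u / v - 1 :=
          Real.log_le_sub_one_of_pos (div_pos (hq.trans_le hu) hv0)
      _ = (u - v) / v := by field_simp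
      _ ≤ |u - v| / v := by gcongr; exact le_abs_self _
      _ ≤ |u - v| / q := by gcongr
  refine abs_le'.mpr ⟨key a b ha hb, ?_⟩
  rw [← Real.log_inv, inv_div, abs_sub_comm]
  exact key b a hb ha


/-- comparison of the per-coordinate acceptance densities of the
ideal p-tampering attack (`A`, with unbounded rejection sampling) and of its
`k`-cut variant (`B`, which gives up after `k` rejections): for `r ∈ [0,1]` and
`0 ≤ c ≤ 1/(2 − p)`, both are positive and
`|ln(A/B)| ≤ p/((1 − p)²·(2 − p)^{k−1})`. -/
theorem kcut_vs_ideal_max_divergence (p : ℝ) (hp : p ∈ Set.Ioo (0 : ℝ) 1)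
    (k : ℕ) (hk : 1 ≤ k) (r c : ℝ)
    (hr : r ∈ Set.Icc (0 : ℝ) 1) (hc0 : 0 ≤ c) (hc1 : c ≤ 1 / (2 - p))
    (A B : ℝ)
    (hA : A = (1 - p) + p * (1 - r) / (1 - c))
    (hB : B = (1 - p) + p * (c ^ k + (1 - r) * (1 - c ^ k) / (1 - c))) :
    0 < A ∧ 0 < B ∧
      |Real.log (A / B)| ≤ p / ((1 - p) ^ 2 * (2 - p) ^ (k - 1)) := by
  obtain ⟨hp0, hp1⟩ := hp
  obtain ⟨hr0, hr1⟩ := hr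
  have hq : 0 < 1 - p := by linarith
  have h2 : 0 < 2 - p := by linarith
  have hc2 : c * (2 - p) ≤ 1 := (le_div_iff₀ h2).mp hc1
  have hclt : c < 1 := by nlinarith
  have hc : 0 < 1 - c := by linarith
  have hck0 : 0 ≤ c ^ k := pow_nonneg hc0 k
  have hck1 : c ^ k ≤ 1 := pow_le_one₀ hc0 hclt.le
  obtain ⟨x, hx⟩ : ∃ x, x = (1 - r) / (1 - c) := ⟨_, rfl⟩
  have hx0 : 0 ≤ x := hx ▸ div_nonneg (by linarith) hc.le
  have hxu : x - 1 ≤ 1 / (1 - p) := by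
    rw [hx, div_sub_one hc.ne', div_le_div_iff₀ hc hq]
    nlinarith
  have hxl : |x - 1| ≤ 1 / (1 - p) := by
    have h1 : 1 ≤ 1 / (1 - p) := by rw [le_div_iff₀ hq]; linarith
    exact abs_le.mpr ⟨by linarith, hxu⟩
  have hA' : A = (1 - p) + p * x := by rw [hA, hx]; ring
  have hB' : B = (1 - p) + p * (c ^ k + x * (1 - c ^ k)) := by rw [hB, hx]; ring
  have hAq : 1 - p ≤ A := by
    rw [hA']; exact le_add_of_nonneg_right (mul_nonneg hp0.le hx0)
  have hBq : 1 - p ≤ B := by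
    rw [hB']
    exact le_add_of_nonneg_right
      (mul_nonneg hp0.le (add_nonneg hck0 (mul_nonneg hx0 (by linarith))))
  refine ⟨hq.trans_le hAq, hq.trans_le hBq, ?_⟩
  have hpow : c ^ k ≤ 1 / (2 - p) ^ (k - 1) :=
    calc c ^ k ≤ c ^ (k - 1) := pow_le_pow_of_le_one hc0 hclt.le (Nat.sub_le k 1)
      _ ≤ (1 / (2 - p)) ^ (k - 1) := by gcongr
      _ = 1 / (2 - p) ^ (k - 1) := by rw [one_div_pow]
  have hsub : |A - B| = p * c ^ k * |x - 1| := by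
    rw [show A - B = p * c ^ k * (x - 1) by rw [hA', hB']; ring, abs_mul,
      abs_of_nonneg (mul_nonneg hp0.le hck0)]
  calc |Real.log (A / B)| ≤ |A - B| / (1 - p) := abs_log_div_le_abs_sub_div hq hAq hBq
    _ = p * c ^ k * |x - 1| / (1 - p) := by rw [hsub]
    _ ≤ p * (1 / (2 - p) ^ (k - 1)) * (1 / (1 - p)) / (1 - p) := by gcongr
    _ = p / ((1 - p) ^ 2 * (2 - p) ^ (k - 1)) := by field_simp
end

section
/- Let D be a PMF on a countable set α, let n ∈ ℕ, and let m ≤ n. For each i ∈ {1,…,n} let t_i : α^{i−1} → {keep, tamper} be an arbitrary (deterministic) function, and suppose that for every x ∈ α^n the number of indices i with t_i(x_1,…,x_{i−1}) = keep is at least m. Define σ : α^n → α^m by letting σ(x) = (x_{u_1(x)},…,x_{u_m(x)}), where u_1(x) < u_2(x) < … < u_m(x) are the first m indices i at which t_i(x_1,…,x_{i−1}) = keep. Then the pushforward of the product PMF D^n under σ equals D^m; i.e., the subsequence of an i.i.d. sample consisting of the first m positions that the adaptive selection rule keeps is itself distributed as m i.i.d. samples from D. (This is the key probabilistic step in the proof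 that special PAC learnability is preserved under weak p-budget tampering attacks, with m = (1−p)·n.) -/
/-!
The proof is by induction on `n`, peeling off the first coordinate `x 0 = a`. The decision about
coordinate `0` does not depend on `x`, and once `a` is fixed the remaining decisions form an
adaptive rule on the other `n` coordinates, so the induction hypothesis applies on each fibre.

* If coordinate `0` is kept and `m > 0`, then `u x 0 = 0`, so only the fibre `a = y 0` contributes,
  with weight `D (y 0)`, and the remaining selection must reproduce the tail of `y`.
* Otherwise coordinate `0` is never selected, every fibre contributes `D a * ∏ j, D (y j)`, and
  summing over `a` gives the claim because `D` has total mass one.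

The induction `hasSum_kept` is stated with `HasSum`, which carries the summability needed to sum
fibre by fibre (`hasSum_of_cons_fibers`).
-/

open scoped Classical

/-- Tonelli for nonnegative functions on `α^(n+1)`, sliced along the first coordinate. -/
theorem hasSum_of_cons_fibers {α : Type*} {n : ℕ} {f : (Fin (n + 1) → α) → ℝ}
    (hf : ∀ x, 0 ≤ f x) {g : α → ℝ} {s : ℝ}
    (hg : ∀ a, HasSum (fun x : Fin n → α => f (Fin.cons a x)) (g a)) (hs : HasSum g s) :
    HasSum f s := by
  have hsum : Summable fun p : α × (Fin n → α) => f (Fin.cons p.1 p.2) := by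
    rw [summable_prod_of_nonneg (fun p => hf _)]
    refine ⟨fun a => (hg a).summable, ?_⟩
    simpa only [(hg _).tsum_eq] using hs.summable
  rw [← (Fin.consEquiv fun _ : Fin (n + 1) => α).hasSum_iff]
  have h := hsum.hasSum
  rwa [(h.prod_fiberwise hg).unique hs] at h

/-- The pushforward identity as a `HasSum`. No lower bound on the number of kept positions is
assumed: it is implied by the existence of `u`. -/
theorem hasSum_kept {α : Type*} (D : α → ℝ) (hD0 : ∀ a, 0 ≤ D a) (hD1 : HasSum D 1) (n : ℕ) :
    ∀ (m : ℕ) (t : Fin n → (Fin n → α) → Bool)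
      (_ : ∀ (i : Fin n) (x y : Fin n → α),
        (∀ j : Fin n, (j : ℕ) < (i : ℕ) → x j = y j) → t i x = t i y)
      (u : (Fin n → α) → Fin m → Fin n)
      (_ : ∀ x, StrictMono (u x))
      (_ : ∀ (x : Fin n → α) (j : Fin m), t (u x j) x = true)
      (_ : ∀ (x : Fin n → α) (j : Fin m) (i : Fin n),
        i < u x j → t i x = true → ∃ j' : Fin m, j' < j ∧ u x j' = i)
      (y : Fin m → α),
      HasSum (fun x : Fin n → α =>
        if (fun j : Fin m => x (u x j)) = y then ∏ i, D (x i) else 0) (∏ j, D (y j)) := by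
  induction n with
  | zero =>
    intro m t _ u _ _ _ y
    obtain rfl : m = 0 := by
      by_contra h
      exact (u Fin.elim0 ⟨0, Nat.pos_of_ne_zero h⟩).elim0
    simp [Subsingleton.elim _ y]
  | succ n ih =>
    intro m t ht u hmono hkept hfirst y
    have hnonneg : ∀ x : Fin (n + 1) → α,
        0 ≤ if (fun j : Fin m => x (u x j)) = y then ∏ i, D (x i) else 0 := by
      intro x
      split_ifs
      · exact Finset.prod_nonneg fun i _ => hD0 _
      · exact le_rfl
    -- the rule obtained by fixing the first sample is again adaptive
    have ht' : ∀ (a : α) (i : Fin n) (x z : Fin n → α),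
        (∀ j : Fin n, (j : ℕ) < (i : ℕ) → x j = z j) →
          t i.succ (Fin.cons a x) = t i.succ (Fin.cons a z) := by
      intro a i x z h
      refine ht _ _ _ fun j => Fin.cases (by simp) (fun j hj => ?_) j
      simpa using h j (by simpa using hj)
    by_cases hne : ∀ x j, u x j ≠ 0
    · -- coordinate `0` is never selected
      refine hasSum_of_cons_fibers hnonneg (g := fun a => D a * ∏ j, D (y j)) (fun a => ?_)
        (by simpa using hD1.mul_right (∏ j, D (y j)))
      have key := ih m (fun i x => t i.succ (Fin.cons a x)) (ht' a)
        (fun x j => (u (Fin.cons a x) j).pred (hne _ _))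
        (fun x j k hjk => Fin.pred_lt_pred_iff.2 (hmono _ hjk))
        (fun x j => by simpa using hkept (Fin.cons a x) j)
        (fun x j i hi hti => by
          obtain ⟨j', hj', h⟩ := hfirst (Fin.cons a x) j i.succ ((Fin.lt_pred_iff (hne _ _)).1 hi) hti
          exact ⟨j', hj', by simp [h]⟩) y
      have hsel : ∀ (x : Fin n → α) j, (Fin.cons a x : Fin (n + 1) → α) (u (Fin.cons a x) j)
          = x ((u (Fin.cons a x) j).pred (hne _ _)) := by
        intro x j
        conv_lhs => rw [← Fin.succ_pred _ (hne (Fin.cons a x) j)]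
        rw [Fin.cons_succ]
      simpa only [hsel, Fin.prod_univ_succ, Fin.cons_zero, Fin.cons_succ, mul_ite, mul_zero]
        using key.mul_left (D a)
    · -- coordinate `0` is selected for some realization, hence kept on every one
      push Not at hne
      obtain ⟨x₀, j₀, h₀⟩ := hne
      have ht0 : ∀ x, t 0 x = true := fun x => by
        rw [ht 0 x x₀ (by simp), ← h₀]
        exact hkept x₀ j₀
      obtain _ | m := m
      · exact j₀.elim0
      have hu0 : ∀ x, u x 0 = 0 := by
        intro x
        by_contra h
        obtain ⟨j', hj', -⟩ := hfirst x 0 0 (Fin.pos_iff_ne_zero.2 h) (ht0 x)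
        exact absurd hj' (Fin.not_lt_zero _)
      have hne : ∀ x (j : Fin m), u x j.succ ≠ 0 := fun x j h =>
        absurd (hmono x (Fin.succ_pos j)) (by simp [h])
      refine hasSum_of_cons_fibers hnonneg
        (g := fun a => if a = y 0 then ∏ j, D (y j) else 0) (fun a => ?_)
        (hasSum_ite_eq (y 0) _)
      have key := ih m (fun i x => t i.succ (Fin.cons a x)) (ht' a)
        (fun x j => (u (Fin.cons a x) j.succ).pred (hne _ _))
        (fun x j k hjk => Fin.pred_lt_pred_iff.2 (hmono _ (Fin.succ_lt_succ_iff.2 hjk)))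
        (fun x j => by simpa using hkept (Fin.cons a x) j.succ)
        (fun x j i hi hti => by
          obtain ⟨j', hj', h⟩ := hfirst (Fin.cons a x) j.succ i.succ ((Fin.lt_pred_iff (hne _ _)).1 hi) hti
          -- `j'` is not `0`, since `u _ 0 = 0` while `u _ j' = i.succ`
          obtain rfl | ⟨k, rfl⟩ := Fin.eq_zero_or_eq_succ j'
          · rw [hu0] at h
            exact absurd h.symm (Fin.succ_ne_zero i)
          · exact ⟨k, Fin.succ_lt_succ_iff.1 hj', by simp [h]⟩) (fun j => y j.succ)
      have hsel : ∀ (x : Fin n → α), (fun j => (Fin.cons a x : Fin (n + 1) → α)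
          (u (Fin.cons a x) j)) = y ↔ a = y 0 ∧
            (fun j : Fin m => x ((u (Fin.cons a x) j.succ).pred (hne _ _)))
              = fun j => y j.succ := by
        intro x
        simp only [funext_iff, Fin.forall_fin_succ, hu0, Fin.cons_zero]
        refine and_congr_right fun _ => forall_congr' fun j => ?_
        conv_lhs => rw [← Fin.succ_pred _ (hne (Fin.cons a x) j)]
        rw [Fin.cons_succ]
      simp only [hsel]
      by_cases ha : a = y 0
      · subst ha
        simpa [Fin.prod_univ_succ] using key.mul_left (D (y 0))
      · simp [ha]

/-- let `D` be a PMF on a countable set `α`, `m ≤ n`, and let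
`t i` be a deterministic adaptive selection rule deciding, from the first `i`
original samples only, whether the `(i+1)`-st sample is kept (`true`) or
tampered (`false`), always keeping at least `m` positions. If `u x` enumerates,
in increasing order, the first `m` kept indices on realization `x`, then the
pushforward of the product PMF `D^n` under `x ↦ (x_{u_1(x)},…,x_{u_m(x)})`
equals the product PMF `D^m`. -/
theorem kept_subsequence_is_iid {α : Type*} [Countable α]
    (D : α → ℝ) (hD0 : ∀ a, 0 ≤ D a) (hD1 : HasSum D 1)
    (n m : ℕ) (hm : m ≤ n)
    (t : Fin n → (Fin n → α) → Bool)
    -- the decision about coordinate `i` depends only on the coordinates before `i`: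
    (ht : ∀ (i : Fin n) (x y : Fin n → α),
      (∀ j : Fin n, (j : ℕ) < (i : ℕ) → x j = y j) → t i x = t i y)
    -- at least `m` positions are kept on every realization:
    (hcard : ∀ x : Fin n → α,
      m ≤ (Finset.univ.filter fun i : Fin n => t i x = true).card)
    (u : (Fin n → α) → Fin m → Fin n)
    -- `u x` is strictly increasing,
    (humono : ∀ x, StrictMono (u x))
    -- consists of kept indices,
    (hukept : ∀ (x : Fin n → α) (j : Fin m), t (u x j) x = true)
    -- and consists of the *first* kept indices:
    (hufirst : ∀ (x : Fin n → α) (j : Fin m) (i : Fin n),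
      i < u x j → t i x = true → ∃ j' : Fin m, j' < j ∧ u x j' = i) :
    ∀ y : Fin m → α,
      (∑' x : Fin n → α,
          if (fun j : Fin m => x (u x j)) = y then ∏ i, D (x i) else 0)
        = ∏ j, D (y j) := by
  intro y
  exact (hasSum_kept D hD0 hD1 n m t ht u humono hukept hufirst y).tsum_eq
end

section
/- Let p ∈ (0,1) and a, b ∈ [−1,1], and set r = (1 − a)/(3 − p − (1 − p)·b) and c = (1 − b)/(3 − p − (1 − p)·b). Then 0 ≤ c < 1, the geometric series Σ_{j=0}^∞ c^j converges to 1/(1 − c), and (1 − p) + p·(1 − r)·Σ_{j=0}^∞ c^j = (2 − p + p·a)/(2 − p + p·b). (This identity evaluates the total acceptance density of the ideal p-tampering rejection-sampling loop: with probability 1−p the block is untouched, and with probability p the loop accepts a candidate with per-round rejection probability c and final acceptance probability 1−r, yielding the tilted density (2 − p + p·a)/(2 − p + p·b).) -/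
/-!
With `D = 3 - p - (1 - p) b` and `N = 2 - p + p b`, both positive, one has `D - (1 - b) = N`, hence
`1 - c = N / D` and `0 ≤ c < 1`. The geometric sum is then `D / N`, so the factor `D` in `1 - r`
cancels and the claim becomes
`(1 - p) N + p (D - (1 - a)) = 2 - p + p a`, in which the terms in `b` cancel.
-/

/-- for `p ∈ (0,1)`, `a, b ∈ [−1,1]`,
`r = (1 − a)/(3 − p − (1 − p)·b)` and `c = (1 − b)/(3 − p − (1 − p)·b)`, one has
`0 ≤ c < 1`, the geometric series `Σ c^j` converges to `1/(1 − c)`, and the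
total acceptance density of the ideal p-tampering rejection-sampling loop is
`(1 − p) + p·(1 − r)·Σ_{j=0}^∞ c^j = (2 − p + p·a)/(2 − p + p·b)`. -/
theorem ideal_pTam_acceptance_density (p a b r c : ℝ)
    (hp : p ∈ Set.Ioo (0 : ℝ) 1)
    (ha : a ∈ Set.Icc (-1 : ℝ) 1) (hb : b ∈ Set.Icc (-1 : ℝ) 1)
    (hr : r = (1 - a) / (3 - p - (1 - p) * b))
    (hc : c = (1 - b) / (3 - p - (1 - p) * b)) :
    0 ≤ c ∧ c < 1 ∧
      HasSum (fun j : ℕ => c ^ j) (1 / (1 - c)) ∧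
      (1 - p) + p * (1 - r) * ∑' j : ℕ, c ^ j
        = (2 - p + p * a) / (2 - p + p * b) := by
  obtain ⟨hp0, hp1⟩ := hp
  obtain ⟨ha0, ha1⟩ := ha
  obtain ⟨hb0, hb1⟩ := hb
  have hD : 0 < 3 - p - (1 - p) * b := by nlinarith
  have hN : 0 < 2 - p + p * b := by nlinarith
  have h1c : 1 - c = (2 - p + p * b) / (3 - p - (1 - p) * b) := by
    rw [hc, eq_div_iff hD.ne', sub_mul, div_mul_cancel₀ _ hD.ne']
    ring
  have h1r : 1 - r = (2 - p - (1 - p) * b + a) / (3 - p - (1 - p) * b) := by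
    rw [hr, eq_div_iff hD.ne', sub_mul, div_mul_cancel₀ _ hD.ne']
    ring
  have hc0 : 0 ≤ c := by
    rw [hc]
    exact div_nonneg (by linarith) hD.le
  have hc1 : c < 1 := by
    have : 0 < 1 - c := h1c ▸ div_pos hN hD
    linarith
  have hs : HasSum (fun j : ℕ => c ^ j) (1 / (1 - c)) := by
    rw [one_div]
    exact hasSum_geometric_of_lt_one hc0 hc1
  refine ⟨hc0, hc1, hs, ?_⟩
  rw [hs.tsum_eq, h1c, h1r, one_div_div, mul_assoc, div_mul_div_cancel₀ hD.ne',
    eq_div_iff hN.ne', add_mul, mul_assoc p, div_mul_cancel₀ _ hN.ne']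
  ring
end
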